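/- arXiv:1303.3767 — 4 statements merged into one kernel-verified Lean document; each statement's English description precedes it below -/
import Mathlib

section
/- Let N ≥ 2. A function f : ℤ → ℤ belongs to NDPF⁽¹⁾_N if and only if f can be written as a composite f_{i_1} ∘ f_{i_2} ∘ ⋯ ∘ f_{i_m} of the generators f_i (with m ≥ 0, each i_t ∈ {0,…,N−1}, and the empty composite equal to the identity). Equivalently, NDPF⁽¹⁾_N is exactly the submonoid of the monoid of functions ℤ → ℤ under composition generated by {f_0, …, f_{N−1}}. -/
/-!
Write `τ_k` for the shift `x ↦ x - k`.

A nonempty composite of generators is not injective, because the factor applied first already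
identifies `i` and `i + 1`; the other conditions are stable under composition.

Conversely, induct on the total displacement `∑ (j - f j)` over one period (`disp`). Let `f` be
non-injective and let `i + 1` be the right end of a maximal flat stretch of `f`, so
`f i = f (i + 1) < f (i + 2)` (`exists_flat_end`). Then `f = g ∘ f_i`, where `g` raises the value
of `f` by one on the class of `i + 1` modulo `N`; this `g` is again regressive, monotone and
skew-periodic, with smaller displacement. If `g` is the identity or not injective, the induction
hypothesis applies to it. Otherwise `g` is an injective monotone skew-periodic map, hence a shift
`τ_k` (`eq_shift_of_injective`) with `k ≥ 1`, which is not a parking function. In that case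
`f = τ_k ∘ f_i` is factored on the other side: `f = f_{i-k} ∘ g'`, where `g'` agrees with `τ_k`
except that it is larger by one on the class of `i`. Since `k ≥ 1`, `g'` is regressive, and it
identifies `i` with `i + 1`, so the induction hypothesis applies to `g'`.
-/

/-- The generator `f_i : ℤ → ℤ` of the affine nondecreasing parking functions:
`f_i(j) = j - 1` if `j ≡ i + 1 (mod N)` and `f_i(j) = j` otherwise. -/
def fgen (N i : ℕ) : ℤ → ℤ := fun j =>
  if j % (N : ℤ) = ((i : ℤ) + 1) % (N : ℤ) then j - 1 else j

/-- `f` is an affine non-decreasing parking function: regressive, order-preserving,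
skew-periodic, and either the identity or not injective. -/
def AffNDPF (N : ℕ) (f : ℤ → ℤ) : Prop :=
  (∀ i : ℤ, f i ≤ i) ∧ Monotone f ∧ (∀ i : ℤ, f (i + N) = f i + N) ∧
    (f = id ∨ ¬ Function.Injective f)

/-- `f` is a composite of generators. -/
def IsWord (N : ℕ) (f : ℤ → ℤ) : Prop :=
  ∃ l : List ℕ, (∀ i ∈ l, i < N) ∧ f = (l.map (fgen N)).foldr (· ∘ ·) id

/-- The total displacement of `f` over one period, used as induction measure. For a regressive
`f` every summand is nonnegative, so `toNat` loses nothing. -/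
def disp (N : ℕ) (f : ℤ → ℤ) : ℕ := (∑ j ∈ Finset.range N, ((j : ℤ) - f j)).toNat

theorem IsWord.cons {N : ℕ} {g : ℤ → ℤ} (hg : IsWord N g) {i : ℕ} (hi : i < N) :
    IsWord N (fgen N i ∘ g) := by
  obtain ⟨l, hl, rfl⟩ := hg
  refine ⟨i :: l, ?_, rfl⟩
  simpa using ⟨hi, hl⟩

theorem IsWord.snoc {N : ℕ} {g : ℤ → ℤ} (hg : IsWord N g) {i : ℕ} (hi : i < N) :
    IsWord N (g ∘ fgen N i) := by
  obtain ⟨l, hl, rfl⟩ := hg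
  refine ⟨l ++ [i], ?_, ?_⟩
  · intro a ha
    rcases List.mem_append.1 ha with h | h
    · exact hl a h
    · rw [List.mem_singleton.1 h]; exact hi
  · clear hl
    induction l with
    | nil => rfl
    | cons a l ih =>
      simp only [List.map_cons, List.foldr_cons, List.cons_append, Function.comp_assoc, ih]

theorem residue_lt {N : ℕ} (hN : 2 ≤ N) (i : ℤ) : (i % (N : ℤ)).toNat < N := by
  have h1 := Int.emod_nonneg i (b := (N : ℤ)) (by omega)
  have h2 := Int.emod_lt_of_pos i (b := (N : ℤ)) (by omega)
  omega

/-- The generator attached to the residue of an arbitrary integer `i`. -/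
theorem fgen_residue {N : ℕ} (hN : 2 ≤ N) (i j : ℤ) :
    fgen N (i % (N : ℤ)).toNat j = if j % (N : ℤ) = (i + 1) % (N : ℤ) then j - 1 else j := by
  have h1 := Int.emod_nonneg i (b := (N : ℤ)) (by omega)
  simp only [fgen, Int.toNat_of_nonneg h1, Int.emod_add_emod]

/-- Consecutive integers are incongruent, since `N ≥ 2`. -/
theorem succ_emod_ne {N : ℕ} (hN : 2 ≤ N) (x : ℤ) : (x + 1) % (N : ℤ) ≠ x % (N : ℤ) := by
  intro h
  have h1 : (N : ℤ) ∣ x + 1 - x := Int.ModEq.dvd (Eq.symm h)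
  have h2 := Int.le_of_dvd (by omega) h1
  omega

theorem add_mul_of_periodic {N : ℕ} {f : ℤ → ℤ} (hf : ∀ i : ℤ, f (i + N) = f i + N) (x m : ℤ) :
    f (x + N * m) = f x + N * m := by
  induction m using Int.induction_on with
  | zero => simp
  | succ m ih =>
    rw [show x + (N : ℤ) * (m + 1) = x + N * m + N by ring, hf, ih]; ring
  | pred m ih =>
    have h := hf (x + N * (-m - 1))
    rw [show x + (N : ℤ) * (-m - 1) + N = x + N * (-m) by ring, ih] at h
    linarith

theorem exists_of_emod_eq {N : ℕ} {x y : ℤ} (h : x % (N : ℤ) = y % (N : ℤ)) :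
    ∃ m, x = y + N * m := by
  obtain ⟨m, hm⟩ : (N : ℤ) ∣ x - y := Int.ModEq.dvd (Eq.symm h)
  exact ⟨m, by linarith⟩

theorem disp_lt {N : ℕ} (hN : 2 ≤ N) {f g : ℤ → ℤ} (hf : ∀ i : ℤ, f (i + N) = f i + N)
    (hg : ∀ i : ℤ, g (i + N) = g i + N) (hreg : ∀ i, g i ≤ i) (hle : ∀ x, f x ≤ g x)
    (x : ℤ) (hx : f x < g x) : disp N g < disp N f := by
  have hlt : ∑ j ∈ Finset.range N, ((j : ℤ) - g j) < ∑ j ∈ Finset.range N, ((j : ℤ) - f j) := by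
    refine Finset.sum_lt_sum (fun j _ => by linarith [hle j])
      ⟨(x % (N : ℤ)).toNat, Finset.mem_range.2 (residue_lt hN x), ?_⟩
    rw [Int.toNat_of_nonneg (Int.emod_nonneg x (by omega))]
    have e := Int.emod_add_mul_ediv x N
    have h1 := add_mul_of_periodic hf (x % N) (x / N)
    have h2 := add_mul_of_periodic hg (x % N) (x / N)
    rw [e] at h1 h2
    linarith
  have h0 : 0 ≤ ∑ j ∈ Finset.range N, ((j : ℤ) - g j) :=
    Finset.sum_nonneg fun j _ => by linarith [hreg j]
  unfold disp
  omega

theorem eq_shift_of_injective {N : ℕ} (hN : 2 ≤ N) {g : ℤ → ℤ} (hm : Monotone g)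
    (hp : ∀ i : ℤ, g (i + N) = g i + N) (hinj : Function.Injective g) (x : ℤ) :
    g x = x + g 0 := by
  have hs := hm.strictMono_of_injective hinj
  -- `x ↦ g x - x` is monotone and `N`-periodic, hence constant.
  have hmono : Monotone fun x => g x - x := monotone_int_of_le_succ fun n => by
    have := hs (lt_add_one n)
    omega
  have hstep : ∀ n, g (n + 1) - (n + 1) = g n - n := fun n => by
    have h1 := hmono (show n ≤ n + 1 by omega)
    have h2 := hmono (show n + 1 ≤ n + N by omega)
    have h3 := hp n
    simp only at h1 h2
    omega
  induction x using Int.induction_on with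
  | zero => simp
  | succ m ih => have := hstep m; omega
  | pred m ih =>
    have := hstep (-m - 1)
    rw [show (-(m : ℤ) - 1 + 1) = -m by ring] at this
    omega

/-- A non-injective `f` has a flat stretch, and by skew-periodicity every flat stretch is
bounded; `i + 1` is its right end. -/
theorem exists_flat_end {N : ℕ} (hN : 2 ≤ N) {f : ℤ → ℤ} (hm : Monotone f)
    (hp : ∀ i : ℤ, f (i + N) = f i + N) (hinj : ¬ Function.Injective f) :
    ∃ i, f i = f (i + 1) ∧ f (i + 1) < f (i + 2) := by
  obtain ⟨a, b, hab, hne⟩ : ∃ a b, f a = f b ∧ a < b := by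
    simp only [Function.Injective, not_forall] at hinj
    obtain ⟨a, b, h, hne⟩ := hinj
    rcases lt_or_gt_of_ne hne with h' | h'
    · exact ⟨a, b, h, h'⟩
    · exact ⟨b, a, h.symm, h'⟩
  obtain ⟨z, hz, hmax⟩ := Int.exists_greatest_of_bdd (P := fun z => f z = f a)
    ⟨a + N, fun z hz => by
      by_contra! hlt
      have h1 := hm hlt.le
      have h2 := hp a
      omega⟩ ⟨a, rfl⟩
  have hbz := hmax b hab.symm
  refine ⟨z - 1, ?_, ?_⟩
  · have h1 := hm (show a ≤ z - 1 by omega)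
    have h2 := hm (show z - 1 ≤ z by omega)
    rw [sub_add_cancel]
    omega
  · rw [sub_add_cancel, show z - 1 + 2 = z + 1 by ring]
    refine lt_of_le_of_ne (hm (by omega)) fun h => ?_
    have := hmax (z + 1) (h.symm.trans hz)
    omega

theorem isWord_of_affNDPF {N : ℕ} (hN : 2 ≤ N) (n : ℕ) :
    ∀ f : ℤ → ℤ, disp N f = n → AffNDPF N f → IsWord N f := by
  induction n using Nat.strong_induction_on with
  | _ n ih =>
  rintro f rfl ⟨hreg, hm, hp, hid⟩
  rcases hid with rfl | hinj
  · exact ⟨[], by simp, rfl⟩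
  obtain ⟨i, hi1, hi2⟩ := exists_flat_end hN hm hp hinj
  -- The flat step and the following jump recur along the class of `i + 1`.
  have hcls : ∀ x : ℤ, x % (N : ℤ) = (i + 1) % (N : ℤ) → f (x - 1) = f x ∧ f x < f (x + 1) := by
    intro x hx
    obtain ⟨m, rfl⟩ := exists_of_emod_eq hx
    rw [show i + 1 + N * m - 1 = i + N * m by ring,
      show i + 1 + N * m + 1 = i + 2 + N * m by ring]
    simp only [add_mul_of_periodic hp]
    omega
  obtain ⟨g, hg⟩ : ∃ g : ℤ → ℤ, ∀ x, g x = f x + if x % (N : ℤ) = (i + 1) % (N : ℤ) then 1 else 0 :=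
    ⟨_, fun _ => rfl⟩
  have hfg : f = g ∘ fgen N (i % (N : ℤ)).toNat := by
    funext x
    rw [Function.comp_apply, fgen_residue hN]
    split_ifs with h
    · have hne := succ_emod_ne hN (x - 1)
      rw [sub_add_cancel, h] at hne
      rw [hg, if_neg hne.symm, (hcls x h).1, add_zero]
    · rw [hg, if_neg h, add_zero]
  have hgreg : ∀ x, g x ≤ x := by
    intro x
    rw [hg]
    split_ifs with h
    · have h1 := (hcls x h).1
      have h2 := hreg (x - 1)
      omega
    · simpa using hreg x
  have hgm : Monotone g := monotone_int_of_le_succ fun x => by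
    rw [hg, hg]
    have h0 := hm (show x ≤ x + 1 by omega)
    split_ifs with h h'
    · omega
    · have := (hcls x h).2
      omega
    · omega
    · omega
  have hgp : ∀ x : ℤ, g (x + N) = g x + N := by
    intro x
    rw [hg, hg, Int.add_emod_right, hp]
    ring
  have hlt : disp N g < disp N f := by
    refine disp_lt hN hp hgp hgreg (fun x => ?_) (i + 1) ?_
    · rw [hg]; split_ifs <;> omega
    · rw [hg, if_pos rfl]; omega
  by_cases hgood : g = id ∨ ¬ Function.Injective g
  · rw [hfg]
    exact (ih _ hlt g rfl ⟨hgreg, hgm, hgp, hgood⟩).snoc (residue_lt hN i)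
  -- The remaining case: `g` is the shift by `k ≥ 1`.
  push Not at hgood
  obtain ⟨hgid, hginj⟩ := hgood
  obtain ⟨k, hk⟩ : ∃ k : ℤ, ∀ x, g x = x - k :=
    ⟨-g 0, fun x => by rw [eq_shift_of_injective hN hgm hgp hginj x]; ring⟩
  have hk1 : 1 ≤ k := by
    have h0 := hgreg 0
    rw [hk] at h0
    by_contra! hlt
    exact hgid (funext fun x => by rw [hk, id]; omega)
  have hf : ∀ x, f x = x - k - if x % (N : ℤ) = (i + 1) % (N : ℤ) then 1 else 0 := fun x => by
    rw [← hk, hg]; ring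
  obtain ⟨g', hg'⟩ : ∃ g' : ℤ → ℤ, ∀ x, g' x = x - k + if x % (N : ℤ) = i % (N : ℤ) then 1 else 0 :=
    ⟨_, fun _ => rfl⟩
  have hreg' : ∀ x, g' x ≤ x := fun x => by
    rw [hg']; split_ifs <;> omega
  have hp' : ∀ x : ℤ, g' (x + N) = g' x + N := fun x => by
    rw [hg', hg', Int.add_emod_right]; ring
  have hlt' : disp N g' < disp N f := by
    refine disp_lt hN hp hp' hreg' (fun x => ?_) i ?_
    · rw [hg', hf]; split_ifs <;> omega
    · rw [hg', hf, if_pos rfl]; split_ifs <;> omega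
  have hfg' : f = fgen N ((i - k) % (N : ℤ)).toNat ∘ g' := by
    funext x
    rw [Function.comp_apply, fgen_residue hN, hf, hg']
    by_cases h : x % (N : ℤ) = i % (N : ℤ)
    · have h1 : x % (N : ℤ) ≠ (i + 1) % (N : ℤ) := fun e =>
        succ_emod_ne hN i (e.symm.trans h)
      have h2 : (x - k + 1) % (N : ℤ) = (i - k + 1) % (N : ℤ) :=
        Int.ModEq.add_right 1 (Int.ModEq.sub_right k h)
      rw [if_pos h, if_neg h1, if_pos h2]
      ring
    · rw [if_neg h, add_zero]
      have h2 : (x - k) % (N : ℤ) = (i - k + 1) % (N : ℤ) ↔ x % (N : ℤ) = (i + 1) % (N : ℤ) := by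
        rw [show i - k + 1 = i + 1 - k by ring]
        refine ⟨fun e => ?_, fun e => Int.ModEq.sub_right k e⟩
        have := Int.ModEq.add_right k e
        rwa [sub_add_cancel, sub_add_cancel] at this
      simp only [h2]
      split_ifs <;> ring
  rw [hfg']
  refine (ih _ hlt' g' rfl ⟨hreg', ?_, hp', Or.inr fun hinj' => ?_⟩).cons (residue_lt hN _)
  · refine monotone_int_of_le_succ fun x => ?_
    rw [hg', hg']; split_ifs <;> omega
  · have h : g' i = g' (i + 1) := by
      rw [hg', hg', if_pos rfl, if_neg (succ_emod_ne hN i)]; ring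
    have := hinj' h
    omega

theorem affNDPF_fgen {N : ℕ} (hN : 2 ≤ N) (i : ℕ) : AffNDPF N (fgen N i) := by
  refine ⟨fun x => ?_, monotone_int_of_le_succ fun x => ?_, fun x => ?_, Or.inr fun h => ?_⟩
  · unfold fgen; split_ifs <;> omega
  · unfold fgen; split_ifs <;> omega
  · unfold fgen; rw [Int.add_emod_right]; split_ifs <;> ring
  · have h1 : fgen N i (i + 1) = i := by simp [fgen]
    have h2 : fgen N i i = i := by
      unfold fgen
      rw [if_neg (succ_emod_ne hN i).symm]
    have := h (h1.trans h2.symm)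
    omega

theorem AffNDPF.comp {N : ℕ} {f g : ℤ → ℤ} (hf : AffNDPF N f) (hg : AffNDPF N g) :
    AffNDPF N (f ∘ g) := by
  obtain ⟨f1, f2, f3, f4⟩ := hf
  obtain ⟨g1, g2, g3, g4⟩ := hg
  refine ⟨fun x => (f1 _).trans (g1 x), f2.comp g2, fun x => by simp [g3, f3], ?_⟩
  rcases g4 with rfl | g4
  · exact f4
  · exact Or.inr fun h => g4 h.of_comp

theorem stmt12 (N : ℕ) (hN : 2 ≤ N) (f : ℤ → ℤ) :
    AffNDPF N f ↔
      ∃ l : List ℕ, (∀ i ∈ l, i < N) ∧ f = (l.map (fgen N)).foldr (· ∘ ·) id := by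
  refine ⟨fun hf => isWord_of_affNDPF hN _ f rfl hf, ?_⟩
  rintro ⟨l, -, rfl⟩
  induction l with
  | nil => exact ⟨fun _ => le_rfl, monotone_id, fun _ => rfl, Or.inl rfl⟩
  | cons a l ih => exact (affNDPF_fgen hN a).comp ih
end

section
/- Let N ≥ 2. The monoid NDPF⁽¹⁾_N (under composition of functions) is J-trivial: if f, g ∈ NDPF⁽¹⁾_N and there exist a, b, c, d ∈ NDPF⁽¹⁾_N such that g = a ∘ f ∘ b and f = c ∘ g ∘ d, then f = g. -/
theorem stmt13 (N : ℕ) (hN : 2 ≤ N) (f g : ℤ → ℤ)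
    (hf : AffNDPF N f) (hg : AffNDPF N g)
    (h1 : ∃ a b : ℤ → ℤ, AffNDPF N a ∧ AffNDPF N b ∧ g = a ∘ f ∘ b)
    (h2 : ∃ c d : ℤ → ℤ, AffNDPF N c ∧ AffNDPF N d ∧ f = c ∘ g ∘ d) :
    f = g := by
  obtain ⟨a, b, ha, hb, hgab⟩ := h1
  obtain ⟨c, d, hc, hd, hfcd⟩ := h2
  -- Regressive factors on either side of a monotone map can only lower it pointwise,
  -- so `g ≤ f` and `f ≤ g`.
  apply le_antisymm
  · intro x
    calc f x = c (g (d x)) := congrFun hfcd x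
      _ ≤ g (d x) := hc.1 _
      _ ≤ g x := hg.2.1 (hd.1 x)
  · intro x
    calc g x = a (f (b x)) := congrFun hgab x
      _ ≤ f (b x) := ha.1 _
      _ ≤ f x := hf.2.1 (hb.1 x)
end

section
/- Let N ≥ 1 and let f : ℤ → ℤ be regressive (f(i) ≤ i for all i), order-preserving (i ≤ j implies f(i) ≤ f(j)), and skew-periodic (f(i+N) = f(i) + N for all i). Suppose m, m' ∈ {1,…,N} with m ≠ m', and suppose m and m' are each maximal in their fibers of f, i.e. f(m) < f(m+1) and f(m') < f(m'+1). Then f(m) ≢ f(m') (mod N). -/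
/-- For `m < m' < m + N`, a jump of `f` right after `m` gives `f m < f m'`, and a jump right after
`m'` gives `f m' < f (m + N) = f m + N`; two values at distance strictly between `0` and `N` are
not congruent modulo `N`. -/
theorem not_modEq_of_lt (N : ℕ) (f : ℤ → ℤ) (hmono : Monotone f)
    (hskew : ∀ i : ℤ, f (i + N) = f i + N) (m m' : ℤ) (hlt : m < m') (hlt' : m' < m + N)
    (hmax : f m < f (m + 1)) (hmax' : f m' < f (m' + 1)) :
    ¬ f m ≡ f m' [ZMOD N] := by
  intro h
  have h1 : f (m + 1) ≤ f m' := hmono (by omega)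
  have h2 : f (m' + 1) ≤ f (m + N) := hmono (by omega)
  rw [hskew] at h2
  have h3 := Int.le_of_dvd (by omega) h.dvd
  omega

theorem stmt14 (N : ℕ) (hN : 1 ≤ N) (f : ℤ → ℤ)
    (hreg : ∀ i : ℤ, f i ≤ i) (hmono : Monotone f)
    (hskew : ∀ i : ℤ, f (i + N) = f i + N)
    (m m' : ℤ) (hm1 : 1 ≤ m) (hmN : m ≤ N) (hm'1 : 1 ≤ m') (hm'N : m' ≤ N)
    (hne : m ≠ m')
    (hmax : f m < f (m + 1)) (hmax' : f m' < f (m' + 1)) :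
    ¬ f m ≡ f m' [ZMOD N] := by
  rcases lt_or_gt_of_ne hne with hlt | hlt
  · exact not_modEq_of_lt N f hmono hskew m m' hlt (by omega) hmax hmax'
  · exact fun h => not_modEq_of_lt N f hmono hskew m' m hlt (by omega) hmax' hmax h.symm
end

section
/- Let N ≥ 1 and let x : ℤ → ℤ be a bijection satisfying x(i+N) = x(i) + N for all i ∈ ℤ. Suppose x contains a [321]-pattern, i.e. there exist integers i < j < k with x(i) > x(j) > x(k). Then there exist integers i', k' with i ≤ i' < j < k' ≤ k such that x(i') > x(j) > x(k'), j − i' < N, and k' − j < N. -/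
/-!
Translating an entry of a skew-periodic map by `t * N` with `t ≥ 0` moves it right by `t * N` and
up by `t * N`. So an inversion `a < b`, `x b < x a` survives when `a` is moved right (or `b` moved
left) by multiples of `N`, as long as it does not cross the other position; hence the gap `b - a`
can be reduced to at most `N`. The gap cannot be exactly `N`, since `x (a + N) = x a + N > x a`
would contradict the inversion. The theorem applies this to the inversions `(i, j)` and `(j, k)`.
-/

lemma skew_nat_mul {N : ℕ} {x : ℤ → ℤ} (hskew : ∀ i : ℤ, x (i + N) = x i + N) (a : ℤ) (t : ℕ) :
    x (a + t * N) = x a + t * N := by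
  induction t with
  | zero => simp
  | succ t ih =>
    have h := hskew (a + t * N)
    rw [ih] at h
    have e : a + ((t + 1 : ℕ) : ℤ) * N = a + t * N + N := by push_cast; ring
    rw [e, h]
    push_cast
    ring

/-- The gap of an inversion can be brought strictly below the period by subtracting a
nonnegative multiple of the period. -/
lemma exists_shift {N : ℕ} (hN : 1 ≤ N) {x : ℤ → ℤ} (hskew : ∀ i : ℤ, x (i + N) = x i + N)
    {a b : ℤ} (hab : a < b) (h : x b < x a) :
    ∃ t : ℕ, 0 < b - a - t * N ∧ b - a - t * N < N := by
  have hN' : (0 : ℤ) < N := by exact_mod_cast hN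
  -- Using `b - a - 1` in place of `b - a` leaves a remainder in `[1, N]`.
  have hq : 0 ≤ (b - a - 1) / (N : ℤ) := Int.ediv_nonneg (by omega) hN'.le
  obtain ⟨t, ht⟩ := Int.eq_ofNat_of_zero_le hq
  have h1 := Int.emod_nonneg (b - a - 1) hN'.ne'
  have h2 := Int.emod_lt_of_pos (b - a - 1) hN'
  have h3 := Int.emod_add_mul_ediv (b - a - 1) N
  rw [ht, mul_comm] at h3
  refine ⟨t, by linarith, lt_of_le_of_ne (by linarith) fun hEq => ?_⟩
  have hb : b = a + t * N + N := by linarith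
  have h4 := hskew (a + t * N)
  rw [← hb, skew_nat_mul hskew] at h4
  have : (0 : ℤ) ≤ t * N := by positivity
  linarith

theorem stmt18 (N : ℕ) (hN : 1 ≤ N) (x : ℤ → ℤ)
    (hbij : Function.Bijective x)
    (hskew : ∀ i : ℤ, x (i + N) = x i + N)
    (i j k : ℤ) (hij : i < j) (hjk : j < k)
    (h1 : x j < x i) (h2 : x k < x j) :
    ∃ i' k' : ℤ, i ≤ i' ∧ i' < j ∧ j < k' ∧ k' ≤ k ∧
      x j < x i' ∧ x k' < x j ∧ j - i' < N ∧ k' - j < N := by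
  obtain ⟨s, hs, hs'⟩ := exists_shift hN hskew hij h1
  obtain ⟨t, ht, ht'⟩ := exists_shift hN hskew hjk h2
  have hs0 : (0 : ℤ) ≤ s * N := by positivity
  have ht0 : (0 : ℤ) ≤ t * N := by positivity
  have hxi := skew_nat_mul hskew i s
  have hxk := skew_nat_mul hskew (k - t * N) t
  rw [sub_add_cancel] at hxk
  exact ⟨i + s * N, k - t * N, by linarith, by linarith, by linarith, by linarith, by linarith,
    by linarith, by linarith, by linarith⟩
end
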